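/- Let n ≥ 1 be an integer, 0 < α < n and γ > 0. Suppose 1 ≤ p₁ ≤ q₁ < n/α, 1 ≤ s ≤ t with n/(n+γ−α) < t < n/(n−α), 1/p₂ = 1/p₁ − 1/s', and 1/q₂ = 1/q₁ − 1/t', where s' and t' are the conjugate exponents of s and t. Then there exists a constant C > 0 such that for every f ∈ L^{p₁,q₁}(ℝⁿ), ||I_{α,γ}f||_{L^{p₂,q₂}} ≤ C ||K_{α,γ}||_{L^{s,t}} ||f||_{L^{p₁,q₁}}. -/

import Mathlib

open MeasureTheory Metric
open scoped ENNReal NNReal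

/-- The Riesz kernel `K_α(x) = |x|^{α-n}`. -/
noncomputable def rieszKernel (n : ℕ) (α : ℝ) (x : EuclideanSpace ℝ (Fin n)) : ℝ :=
  ‖x‖ ^ (α - (n : ℝ))

/-- The Bessel-Riesz kernel `K_{α,γ}(x) = |x|^{α-n} / (1+|x|)^γ`. -/
noncomputable def besselRieszKernel (n : ℕ) (α γ : ℝ) (x : EuclideanSpace ℝ (Fin n)) : ℝ :=
  ‖x‖ ^ (α - (n : ℝ)) / (1 + ‖x‖) ^ γ

/-- The Bessel-Riesz operator `I_{α,γ} f (x) = ∫ K_{α,γ}(x-y) f(y) dy`. -/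
noncomputable def besselRiesz (n : ℕ) (α γ : ℝ)
    (f : EuclideanSpace ℝ (Fin n) → ℝ) (x : EuclideanSpace ℝ (Fin n)) : ℝ :=
  ∫ y, besselRieszKernel n α γ (x - y) * f y

/-- The Morrey norm `‖f‖_{L^{p,q}} = sup_B |B|^{1/q-1/p} (∫_B |f|^p)^{1/p}`. -/
noncomputable def morreyNorm (n : ℕ) (p q : ℝ)
    (f : EuclideanSpace ℝ (Fin n) → ℝ) : ℝ≥0∞ :=
  ⨆ (a : EuclideanSpace ℝ (Fin n)) (R : ℝ) (_ : 0 < R),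
    volume (ball a R) ^ (1 / q - 1 / p) *
      (∫⁻ x in ball a R, ENNReal.ofReal (|f x| ^ p)) ^ (1 / p)

/-- The generalized Morrey norm
`‖f‖_{L^{p,φ}} = sup_B (1/φ(R)) ((1/|B|) ∫_B |f|^p)^{1/p}`. -/
noncomputable def gMorreyNorm (n : ℕ) (p : ℝ) (φ : ℝ → ℝ)
    (f : EuclideanSpace ℝ (Fin n) → ℝ) : ℝ≥0∞ :=
  ⨆ (a : EuclideanSpace ℝ (Fin n)) (R : ℝ) (_ : 0 < R),
    (ENNReal.ofReal (φ R))⁻¹ *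
      ((volume (ball a R))⁻¹ * ∫⁻ x in ball a R, ENNReal.ofReal (|f x| ^ p)) ^ (1 / p)

/-- `φ : (0,∞) → (0,∞)` is of class `G_p`: positive on `(0,∞)`, almost decreasing, and
`r ↦ φ(r)^p r^n` is almost increasing. -/
def IsClassG (n : ℕ) (p : ℝ) (φ : ℝ → ℝ) : Prop :=
  (∀ r : ℝ, 0 < r → 0 < φ r) ∧
  (∃ C : ℝ, 0 < C ∧ ∀ r s : ℝ, 0 < r → r ≤ s → C * φ s ≤ φ r) ∧
  (∃ C : ℝ, 0 < C ∧ ∀ r s : ℝ, 0 < r → r ≤ s →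
    φ r ^ p * r ^ (n : ℝ) ≤ C * (φ s ^ p * s ^ (n : ℝ)))

/-- `ρ` is almost increasing on `(0,∞)`. -/
def IsAlmostIncreasing (ρ : ℝ → ℝ) : Prop :=
  ∃ C : ℝ, 0 < C ∧ ∀ r s : ℝ, 0 < r → r ≤ s → ρ r ≤ C * ρ s

/-- Operator norm of `I_{α,γ}` from `L^{p₁,φ}` to `L^{p₂,ψ}`. -/
noncomputable def besselRieszOpNormGM (n : ℕ) (α γ p₁ p₂ : ℝ) (φ ψ : ℝ → ℝ) : ℝ≥0∞ :=
  ⨆ f : {f : EuclideanSpace ℝ (Fin n) → ℝ //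
      Measurable f ∧ gMorreyNorm n p₁ φ f ≠ 0 ∧ gMorreyNorm n p₁ φ f ≠ ⊤},
    gMorreyNorm n p₂ ψ (besselRiesz n α γ f.1) / gMorreyNorm n p₁ φ f.1


theorem br_young {n : ℕ} {k g : EuclideanSpace ℝ (Fin n) → ℝ≥0∞} (hk : Measurable k)
    (hg : Measurable g) {p s r : ℝ} (hp : 1 ≤ p) (hs : 1 ≤ s) (hr : 0 < r)
    (h : 1 / r = 1 / p - (1 - 1 / s)) :
    (∫⁻ x, (∫⁻ y, k (x - y) * g y) ^ r) ^ (1 / r) ≤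
      (∫⁻ x, k x ^ s) ^ (1 / s) * (∫⁻ x, g x ^ p) ^ (1 / p) := by
  have hp0 : 0 < p := by linarith
  have hs0 : 0 < s := by linarith
  have hpi : 1 / p ≤ 1 := by rw [div_le_one hp0]; exact hp
  have hsi : 1 / s ≤ 1 := by rw [div_le_one hs0]; exact hs
  have hri : 0 < 1 / r := by positivity
  have e1 : 0 ≤ 1 / s - 1 / r := by linarith
  have e2 : 0 ≤ 1 / p - 1 / r := by linarith
  set A := ∫⁻ x, k x ^ s with hA
  set B := ∫⁻ x, g x ^ p with hB
  have key : ∀ x, (∫⁻ y, k (x - y) * g y) ≤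
      (∫⁻ y, k (x - y) ^ s * g y ^ p) ^ (1 / r) * A ^ (1 / s - 1 / r) * B ^ (1 / p - 1 / r) := by
    intro x
    have hkx : Measurable fun y => k (x - y) := hk.comp (measurable_const.sub measurable_id)
    have := ENNReal.lintegral_prod_norm_pow_le (μ := (volume : Measure (EuclideanSpace ℝ (Fin n))))
      (Finset.univ : Finset (Fin 3))
      (f := ![fun y => k (x - y) ^ s * g y ^ p, fun y => k (x - y) ^ s, fun y => g y ^ p])
      (p := ![1 / r, 1 / s - 1 / r, 1 / p - 1 / r])
      (by
        intro i _
        fin_cases i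
        · exact ((hkx.pow_const s).mul (hg.pow_const p)).aemeasurable
        · exact (hkx.pow_const s).aemeasurable
        · exact (hg.pow_const p).aemeasurable)
      (by simp only [Fin.sum_univ_three, Matrix.cons_val_zero, Matrix.cons_val_one, Matrix.cons_val]
          linarith)
      (by
        intro i _
        fin_cases i
        · exact hri.le
        · exact e1
        · exact e2)
    simp only [Fin.prod_univ_three, Matrix.cons_val_zero, Matrix.cons_val_one,
      Matrix.cons_val] at this
    have hAx : ∫⁻ y, k (x - y) ^ s = A :=
      lintegral_sub_left_eq_self (fun z => k z ^ s) x
    rw [hAx] at this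
    refine le_trans (le_of_eq ?_) this
    refine lintegral_congr fun y => ?_
    rw [ENNReal.mul_rpow_of_nonneg _ _ hri.le]
    have h1 : k (x - y) = (k (x - y) ^ s) ^ (1 / r) * (k (x - y) ^ s) ^ (1 / s - 1 / r) := by
      rw [← ENNReal.rpow_add_of_nonneg _ _ hri.le e1, ← ENNReal.rpow_mul]
      rw [show s * (1 / r + (1 / s - 1 / r)) = 1 by field_simp; ring, ENNReal.rpow_one]
    have h2 : g y = (g y ^ p) ^ (1 / r) * (g y ^ p) ^ (1 / p - 1 / r) := by
      rw [← ENNReal.rpow_add_of_nonneg _ _ hri.le e2, ← ENNReal.rpow_mul]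
      rw [show p * (1 / r + (1 / p - 1 / r)) = 1 by field_simp; ring, ENNReal.rpow_one]
    conv_lhs => rw [h1, h2]
    ring
  have hAB : ∫⁻ x, ∫⁻ y, k (x - y) ^ s * g y ^ p = A * B := by
    rw [lintegral_lintegral_swap]
    · have : ∀ y, ∫⁻ x, k (x - y) ^ s * g y ^ p = A * g y ^ p := by
        intro y
        rw [lintegral_mul_const]
        · rw [lintegral_sub_right_eq_self (fun z => k z ^ s) y]
        · exact (hk.comp (measurable_id.sub measurable_const)).pow_const s
      simp_rw [this]
      rw [lintegral_const_mul _ (hg.pow_const p)]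
    · exact (((hk.comp (measurable_fst.sub measurable_snd)).pow_const s).mul
        ((hg.comp measurable_snd).pow_const p)).aemeasurable
  have hm : Measurable fun x => ∫⁻ y, k (x - y) ^ s * g y ^ p :=
    Measurable.lintegral_prod_right' (f := fun z : EuclideanSpace ℝ (Fin n) × EuclideanSpace ℝ (Fin n) => k (z.1 - z.2) ^ s * g z.2 ^ p)
      (((hk.comp (measurable_fst.sub measurable_snd)).pow_const s).mul
        ((hg.comp measurable_snd).pow_const p))
  have step : ∫⁻ x, (∫⁻ y, k (x - y) * g y) ^ r ≤
      A * B * (A ^ (1 / s - 1 / r) * B ^ (1 / p - 1 / r)) ^ r := by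
    rw [← hAB, ← lintegral_mul_const _ hm]
    refine lintegral_mono fun x => ?_
    refine (ENNReal.rpow_le_rpow (key x) hr.le).trans (le_of_eq ?_)
    rw [mul_assoc, ENNReal.mul_rpow_of_nonneg _ _ hr.le, ← ENNReal.rpow_mul,
      one_div_mul_cancel hr.ne', ENNReal.rpow_one]
  refine (ENNReal.rpow_le_rpow step hri.le).trans (le_of_eq ?_)
  rw [ENNReal.mul_rpow_of_nonneg _ _ hri.le, ← ENNReal.rpow_mul, mul_one_div_cancel hr.ne',
    ENNReal.rpow_one, ENNReal.mul_rpow_of_nonneg _ _ hri.le]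
  have h1 : A ^ (1 / s) = A ^ (1 / r) * A ^ (1 / s - 1 / r) := by
    rw [← ENNReal.rpow_add_of_nonneg _ _ hri.le e1]; congr 1; ring
  have h2 : B ^ (1 / p) = B ^ (1 / r) * B ^ (1 / p - 1 / r) := by
    rw [← ENNReal.rpow_add_of_nonneg _ _ hri.le e2]; congr 1; ring
  rw [h1, h2]; ring

theorem br_vol {n : ℕ} (hn : 1 ≤ n) (a : EuclideanSpace ℝ (Fin n)) {R : ℝ} (hR : 0 < R) (m : ℕ) :
    volume (ball a (2 ^ m * R)) = ((2 : ℝ≥0∞) ^ n) ^ m *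
      volume (ball (0 : EuclideanSpace ℝ (Fin n)) R) := by
  have : Nonempty (Fin n) := ⟨⟨0, hn⟩⟩
  rw [Measure.addHaar_ball_mul volume a (by positivity : (0:ℝ) ≤ 2 ^ m), finrank_euclideanSpace,
    Fintype.card_fin, ENNReal.ofReal_pow (by positivity), ENNReal.ofReal_pow (by norm_num),
    ← pow_mul, ← pow_mul, mul_comm m n]
  norm_num

theorem br_ofReal_rpow {n : ℕ} (f : EuclideanSpace ℝ (Fin n) → ℝ) {p : ℝ} (hp : 0 < p)
    (x : EuclideanSpace ℝ (Fin n)) :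
    ENNReal.ofReal (|f x| ^ p) = ‖f x‖ₑ ^ p := by
  rw [← ENNReal.ofReal_rpow_of_nonneg (abs_nonneg _) hp.le, ← Real.norm_eq_abs, ofReal_norm]

theorem br_morrey_ball {n : ℕ} {p q : ℝ} (hp : 0 < p) (f : EuclideanSpace ℝ (Fin n) → ℝ)
    (a : EuclideanSpace ℝ (Fin n)) {R : ℝ} (hR : 0 < R) :
    (∫⁻ x in ball a R, ‖f x‖ₑ ^ p) ^ (1 / p) ≤
      morreyNorm n p q f * volume (ball a R) ^ (1 / p - 1 / q) := by
  have h : volume (ball a R) ^ (1 / q - 1 / p) *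
      (∫⁻ x in ball a R, ENNReal.ofReal (|f x| ^ p)) ^ (1 / p) ≤ morreyNorm n p q f :=
    le_iSup_of_le a (le_iSup_of_le R (le_iSup_of_le hR le_rfl))
  simp_rw [br_ofReal_rpow f hp] at h
  have v0 : volume (ball a R) ≠ 0 := (measure_ball_pos volume a hR).ne'
  have vt : volume (ball a R) ≠ ⊤ := measure_ball_lt_top.ne
  calc _ = (volume (ball a R) ^ (1 / q - 1 / p) * (∫⁻ x in ball a R, ‖f x‖ₑ ^ p) ^ (1 / p))
        * volume (ball a R) ^ (1 / p - 1 / q) := by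
        rw [mul_right_comm, ← ENNReal.rpow_add _ _ v0 vt]
        simp
    _ ≤ _ := by gcongr

theorem br_morrey_one {n : ℕ} {p q : ℝ} (hp : 1 ≤ p) {f : EuclideanSpace ℝ (Fin n) → ℝ}
    (hf : Measurable f) (a : EuclideanSpace ℝ (Fin n)) {R : ℝ} (hR : 0 < R) :
    (∫⁻ x in ball a R, ‖f x‖ₑ) ≤
      morreyNorm n p q f * volume (ball a R) ^ (1 - 1 / q) := by
  have hp0 : 0 < p := by linarith
  have hpi : 1 / p ≤ 1 := by rw [div_le_one hp0]; exact hp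
  have v0 : volume (ball a R) ≠ 0 := (measure_ball_pos volume a hR).ne'
  have vt : volume (ball a R) ≠ ⊤ := measure_ball_lt_top.ne
  have h := ENNReal.lintegral_mul_norm_pow_le (μ := volume.restrict (ball a R))
    (f := fun x => ‖f x‖ₑ ^ p) (g := fun _ => 1) (hf.enorm.pow_const p).aemeasurable
    aemeasurable_const (p := 1 / p) (q := 1 - 1 / p) (by positivity) (by linarith) (by ring)
  simp only [← ENNReal.rpow_mul, mul_one_div_cancel hp0.ne', ENNReal.rpow_one, ENNReal.one_rpow,
    mul_one, lintegral_const, Measure.restrict_apply_univ, one_mul, MeasurableSet.univ, Measure.restrict_apply, Set.univ_inter] at h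
  refine h.trans ?_
  refine (mul_le_mul_left (br_morrey_ball (q := q) hp0 f a hR) _).trans (le_of_eq ?_)
  rw [mul_assoc, ← ENNReal.rpow_add _ _ v0 vt]
  congr 2; ring

theorem br_kernel_point {n : ℕ} (hn : 1 ≤ n) {α γ s t : ℝ} (hαn : α < n) (hγ : 0 < γ) (hs : 1 ≤ s)
    (x : EuclideanSpace ℝ (Fin n)) {R : ℝ} (hR : 0 < R) (hx : R ≤ ‖x‖) :
    ‖besselRieszKernel n α γ x‖ₑ ≤ morreyNorm n s t (besselRieszKernel n α γ) *
      volume (ball (0 : EuclideanSpace ℝ (Fin n)) R) ^ (- (1 / t)) := by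
  have : Nonempty (Fin n) := ⟨⟨0, hn⟩⟩
  have hs0 : 0 < s := by linarith
  set V := volume (ball (0 : EuclideanSpace ℝ (Fin n)) R) with hV
  have v0 : V ≠ 0 := (measure_ball_pos volume _ hR).ne'
  have vt : V ≠ ⊤ := measure_ball_lt_top.ne
  have hb := br_morrey_ball (q := t) hs0 (besselRieszKernel n α γ) 0 hR
  have h1 : ‖besselRieszKernel n α γ x‖ₑ ^ s * V ≤
      ∫⁻ z in ball (0 : EuclideanSpace ℝ (Fin n)) R, ‖besselRieszKernel n α γ z‖ₑ ^ s := by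
    rw [hV, ← setLIntegral_const]
    refine lintegral_mono_ae ?_
    have hne : ∀ᵐ z ∂(volume.restrict (ball (0 : EuclideanSpace ℝ (Fin n)) R)), z ≠ 0 :=
      ae_restrict_of_ae (Measure.ae_ne volume 0)
    filter_upwards [hne, ae_restrict_mem measurableSet_ball] with z hz hzb
    refine ENNReal.rpow_le_rpow ?_ hs0.le
    have hz0 : 0 < ‖z‖ := norm_pos_iff.2 hz
    have hzx : ‖z‖ ≤ ‖x‖ := by
      rw [mem_ball_zero_iff] at hzb; linarith
    rw [Real.enorm_eq_ofReal_abs, Real.enorm_eq_ofReal_abs]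
    refine ENNReal.ofReal_le_ofReal ?_
    unfold besselRieszKernel
    rw [abs_of_nonneg (by positivity), abs_of_nonneg (by positivity)]
    have := Real.rpow_le_rpow_of_nonpos hz0 hzx (by linarith : α - (n : ℝ) ≤ 0)
    gcongr
  have h2 := (ENNReal.rpow_le_rpow h1 (by positivity : 0 ≤ 1 / s)).trans hb
  rw [ENNReal.mul_rpow_of_nonneg _ _ (by positivity), ← ENNReal.rpow_mul,
    mul_one_div_cancel hs0.ne', ENNReal.rpow_one] at h2
  calc _ = ‖besselRieszKernel n α γ x‖ₑ * V ^ (1 / s) * V ^ (- (1 / s)) := by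
        rw [mul_assoc, ← ENNReal.rpow_add _ _ v0 vt]; simp
    _ ≤ morreyNorm n s t (besselRieszKernel n α γ) * V ^ (1 / s - 1 / t) * V ^ (- (1 / s)) := by
        gcongr
    _ = _ := by
        rw [mul_assoc, ← ENNReal.rpow_add _ _ v0 vt]; congr 2; ring

theorem br_kernel_meas (n : ℕ) (α γ : ℝ) : Measurable (besselRieszKernel n α γ) := by
  unfold besselRieszKernel
  fun_prop

theorem br_far {n : ℕ} (hn : 1 ≤ n) {α γ p q q₂ s t : ℝ} (hαn : α < n) (hγ : 0 < γ) (hs : 1 ≤ s)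
    (hp : 1 ≤ p) (hq : 1 ≤ q)
    (hq₂ : 1 / q₂ = 1 / q - (1 - 1 / t)) {f : EuclideanSpace ℝ (Fin n) → ℝ} (hf : Measurable f)
    (x : EuclideanSpace ℝ (Fin n)) {R : ℝ} (hR : 0 < R) :
    ∫⁻ y in (ball x R)ᶜ, ‖besselRieszKernel n α γ (x - y)‖ₑ * ‖f y‖ₑ ≤
      ((2 : ℝ≥0∞) ^ n) ^ (1 - 1 / q) * (1 - ((2 : ℝ≥0∞) ^ n) ^ (-(1 / q₂)))⁻¹ *
      morreyNorm n s t (besselRieszKernel n α γ) * morreyNorm n p q f *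
      volume (ball (0 : EuclideanSpace ℝ (Fin n)) R) ^ (- (1 / q₂)) := by
  have hqi : 1 / q ≤ 1 := by rw [div_le_one (by linarith)]; exact hq
  set V := volume (ball (0 : EuclideanSpace ℝ (Fin n)) R) with hV
  have v0 : V ≠ 0 := (measure_ball_pos volume _ hR).ne'
  have vt : V ≠ ⊤ := measure_ball_lt_top.ne
  set N := morreyNorm n s t (besselRieszKernel n α γ)
  set F := morreyNorm n p q f
  set D := (2 : ℝ≥0∞) ^ n with hD
  have d0 : D ≠ 0 := by simp [hD]
  have dt : D ≠ ⊤ := by simp [hD]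
  have hsub : (ball x R)ᶜ ⊆ ⋃ m : ℕ, (ball x (2 ^ (m + 1) * R) \ ball x (2 ^ m * R)) := by
    intro y hy
    have hy' : R ≤ dist y x := by simpa using hy
    have h1 : 1 ≤ dist y x / R := by rwa [le_div_iff₀ hR, one_mul]
    obtain ⟨m, hm1, hm2⟩ := exists_nat_pow_near h1 (by norm_num : (1:ℝ) < 2)
    rw [le_div_iff₀ hR] at hm1
    rw [div_lt_iff₀ hR] at hm2
    simp only [Set.mem_iUnion, Set.mem_sdiff, mem_ball, not_lt]
    exact ⟨m, hm2, hm1⟩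
  refine (lintegral_mono_set hsub).trans ((lintegral_iUnion_le _ _).trans ?_)
  have hterm : ∀ m : ℕ, ∫⁻ y in (ball x (2 ^ (m + 1) * R) \ ball x (2 ^ m * R)),
      ‖besselRieszKernel n α γ (x - y)‖ₑ * ‖f y‖ₑ ≤
      (D ^ (1 - 1 / q) * N * F * V ^ (- (1 / q₂))) * (D ^ (-(1 / q₂))) ^ m := by
    intro m
    have hRm : 0 < 2 ^ m * R := by positivity
    have hRm' : 0 < 2 ^ (m + 1) * R := by positivity
    set W := D ^ m * V with hW
    have w0 : W ≠ 0 := mul_ne_zero (pow_ne_zero _ d0) v0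
    have wt : W ≠ ⊤ := ENNReal.mul_ne_top (ENNReal.pow_ne_top dt) vt
    have hvW : volume (ball (0 : EuclideanSpace ℝ (Fin n)) (2 ^ m * R)) = W := br_vol hn 0 hR m
    calc _ ≤ ∫⁻ y in (ball x (2 ^ (m + 1) * R) \ ball x (2 ^ m * R)),
          (N * W ^ (-(1 / t))) * ‖f y‖ₑ := by
          refine setLIntegral_mono' (measurableSet_ball.diff measurableSet_ball) fun y hy => ?_
          have : 2 ^ m * R ≤ ‖x - y‖ := by
            have := hy.2
            rwa [mem_ball, not_lt, dist_comm, dist_eq_norm] at this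
          have := br_kernel_point (t := t) hn hαn hγ hs (x - y) hRm this
          rw [hvW] at this
          gcongr
      _ ≤ ∫⁻ y in ball x (2 ^ (m + 1) * R), (N * W ^ (-(1 / t))) * ‖f y‖ₑ :=
          lintegral_mono_set Set.sdiff_subset
      _ = (N * W ^ (-(1 / t))) * ∫⁻ y in ball x (2 ^ (m + 1) * R), ‖f y‖ₑ :=
          lintegral_const_mul _ hf.enorm
      _ ≤ (N * W ^ (-(1 / t))) * (F * (D * W) ^ (1 - 1 / q)) := by
          have := br_morrey_one (q := q) hp hf x hRm'
          rw [br_vol hn x hR (m + 1), pow_succ' (2 ^ n : ℝ≥0∞) m, mul_assoc] at this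
          gcongr
      _ = D ^ (1 - 1 / q) * N * F * (W ^ (-(1 / t)) * W ^ (1 - 1 / q)) := by
          rw [ENNReal.mul_rpow_of_nonneg _ _ (by linarith : 0 ≤ 1 - 1 / q)]; ring
      _ = D ^ (1 - 1 / q) * N * F * W ^ (-(1 / q₂)) := by
          rw [← ENNReal.rpow_add _ _ w0 wt, hq₂]; congr 2; ring
      _ = _ := by
          rw [hW, ENNReal.mul_rpow_of_ne_top (ENNReal.pow_ne_top dt) vt, ← ENNReal.rpow_natCast D m,
            ← ENNReal.rpow_natCast _ m, ← ENNReal.rpow_mul, ← ENNReal.rpow_mul,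
            mul_comm (m : ℝ) _]
          ring
  refine (ENNReal.tsum_le_tsum hterm).trans (le_of_eq ?_)
  rw [ENNReal.tsum_mul_left, ENNReal.tsum_geometric]
  ring

theorem besselRiesz_morrey_bounded' (n : ℕ) (hn : 1 ≤ n) (α γ p₁ q₁ p₂ q₂ s t : ℝ)
    (hα0 : 0 < α) (hαn : α < n) (hγ : 0 < γ)
    (hp₁ : 1 ≤ p₁) (hp₁q₁ : p₁ ≤ q₁) (hq₁ : q₁ < n / α)
    (hs : 1 ≤ s) (hst : s ≤ t)
    (ht1 : (n : ℝ) / (n + γ - α) < t) (ht2 : t < n / (n - α))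
    (hp₂ : 1 / p₂ = 1 / p₁ - (1 - 1 / s))
    (hq₂ : 1 / q₂ = 1 / q₁ - (1 - 1 / t)) :
    ∃ C : ℝ, 0 < C ∧ ∀ f : EuclideanSpace ℝ (Fin n) → ℝ,
      Measurable f → morreyNorm n p₁ q₁ f ≠ ⊤ →
      morreyNorm n p₂ q₂ (besselRiesz n α γ f) ≤
        ENNReal.ofReal C * morreyNorm n s t (besselRieszKernel n α γ) *
          morreyNorm n p₁ q₁ f := by
  have hn0 : (0 : ℝ) < n := by exact_mod_cast hn
  have hp0 : 0 < p₁ := by linarith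
  have hq0 : 0 < q₁ := by linarith
  have hs0 : 0 < s := by linarith
  have ht0 : 0 < t := by linarith
  have hnα : 0 < (n : ℝ) - α := by linarith
  have i1 : α / n < 1 / q₁ := by
    rw [lt_div_iff₀ hα0] at hq₁
    rw [div_lt_div_iff₀ hn0 hq0]; linarith
  have i2 : 1 - α / n < 1 / t := by
    rw [lt_div_iff₀ hnα] at ht2
    rw [one_sub_div hn0.ne', div_lt_div_iff₀ hn0 ht0]; linarith
  have hq₂i : 0 < 1 / q₂ := by rw [hq₂]; linarith
  have i3 : 1 / q₁ ≤ 1 / p₁ := one_div_le_one_div_of_le hp0 hp₁q₁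
  have i4 : 1 / t ≤ 1 / s := one_div_le_one_div_of_le hs0 hst
  have i5 : 1 / p₁ ≤ 1 := by rw [div_le_one hp0]; exact hp₁
  have i6 : 1 / s ≤ 1 := by rw [div_le_one hs0]; exact hs
  have hp₂i : 0 < 1 / p₂ := by rw [hp₂]; linarith
  have hp₂0 : 0 < p₂ := one_div_pos.1 hp₂i
  have hp₂1 : 1 ≤ p₂ := by
    have : 1 / p₂ ≤ 1 := by rw [hp₂]; linarith
    rwa [div_le_one hp₂0] at this
  set D := (2 : ℝ≥0∞) ^ n with hD
  have d1 : 1 < D := by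
    rw [hD]; exact one_lt_pow₀ (by norm_num) (by omega)
  have d0 : D ≠ 0 := by simp [hD]
  have dt : D ≠ ⊤ := by simp [hD]
  set G := D ^ (1 - 1 / q₁) * (1 - D ^ (-(1 / q₂)))⁻¹ with hG
  set C₁ := D ^ (1 / p₁ - 1 / q₁) with hC₁
  have hGt : G ≠ ⊤ := by
    refine ENNReal.mul_ne_top (ENNReal.rpow_ne_top_of_ne_zero d0 dt) ?_
    rw [ENNReal.inv_ne_top]
    exact (tsub_pos_of_lt (ENNReal.rpow_lt_one_of_one_lt_of_neg d1 (by linarith))).ne'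
  have hC₁t : C₁ ≠ ⊤ := ENNReal.rpow_ne_top_of_ne_zero d0 dt
  have hC₁0 : C₁ ≠ 0 := (ENNReal.rpow_pos (by positivity) dt).ne'
  have hCt : C₁ + G ≠ ⊤ := ENNReal.add_ne_top.2 ⟨hC₁t, hGt⟩
  refine ⟨(C₁ + G).toReal, ENNReal.toReal_pos (by simp [hC₁0]) hCt, fun f hf _ => ?_⟩
  rw [ENNReal.ofReal_toReal hCt]
  refine iSup_le fun a => iSup_le fun R => iSup_le fun hR => ?_
  simp_rw [br_ofReal_rpow _ hp₂0]
  have hvol : volume (ball a R) = volume (ball (0 : EuclideanSpace ℝ (Fin n)) R) := by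
    simpa using br_vol hn a hR 0
  rw [hvol]
  set V := volume (ball (0 : EuclideanSpace ℝ (Fin n)) R) with hV
  have v0 : V ≠ 0 := (measure_ball_pos volume _ hR).ne'
  have vt : V ≠ ⊤ := measure_ball_lt_top.ne
  set N := morreyNorm n s t (besselRieszKernel n α γ) with hN
  set F := morreyNorm n p₁ q₁ f with hF
  set k : EuclideanSpace ℝ (Fin n) → ℝ≥0∞ :=
    (ball 0 R).indicator fun z => ‖besselRieszKernel n α γ z‖ₑ with hk
  set g : EuclideanSpace ℝ (Fin n) → ℝ≥0∞ := (ball a (2 ^ 1 * R)).indicator fun z => ‖f z‖ₑ with hg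
  have hkm : Measurable k := (br_kernel_meas n α γ).enorm.indicator measurableSet_ball
  have hgm : Measurable g := hf.enorm.indicator measurableSet_ball
  set U : EuclideanSpace ℝ (Fin n) → ℝ≥0∞ := fun x => ∫⁻ y, k (x - y) * g y with hU
  have hUm : Measurable U :=
    Measurable.lintegral_prod_right'
      (f := fun z : EuclideanSpace ℝ (Fin n) × EuclideanSpace ℝ (Fin n) => k (z.1 - z.2) * g z.2)
      ((hkm.comp (measurable_fst.sub measurable_snd)).mul (hgm.comp measurable_snd))
  set c := G * N * F * V ^ (-(1 / q₂)) with hc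
  have hpt : ∀ x ∈ ball a R, ‖besselRiesz n α γ f x‖ₑ ≤ U x + c := by
    intro x hx
    refine (enorm_integral_le_lintegral_enorm _).trans ?_
    simp_rw [enorm_mul]
    rw [← lintegral_add_compl _ (measurableSet_ball (x := x) (ε := R))]
    refine add_le_add ?_ (br_far hn hαn hγ hs hp₁ (hp₁.trans hp₁q₁) hq₂ hf x hR)
    rw [← lintegral_indicator measurableSet_ball]
    refine lintegral_mono fun y => ?_
    by_cases hy : y ∈ ball x R
    · rw [Set.indicator_of_mem hy]
      have h1 : x - y ∈ ball (0 : EuclideanSpace ℝ (Fin n)) R := by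
        rwa [mem_ball_zero_iff, ← dist_eq_norm, dist_comm]
      have h2 : y ∈ ball a (2 ^ 1 * R) := by
        have := dist_triangle y x a
        rw [mem_ball] at hx hy ⊢
        linarith
      rw [hk, hg, Set.indicator_of_mem h1, Set.indicator_of_mem h2]
    · rw [Set.indicator_of_notMem hy]; exact zero_le
  have hUn : (∫⁻ x in ball a R, U x ^ p₂) ^ (1 / p₂) ≤
      N * V ^ (1 / s - 1 / t) * (F * (C₁ * V ^ (1 / p₁ - 1 / q₁))) := by
    refine (ENNReal.rpow_le_rpow (setLIntegral_le_lintegral _ _) hp₂i.le).trans ?_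
    refine (br_young hkm hgm hp₁ hs hp₂0 hp₂).trans ?_
    have e1 : ∫⁻ x, k x ^ s = ∫⁻ x in ball 0 R, ‖besselRieszKernel n α γ x‖ₑ ^ s := by
      rw [← lintegral_indicator measurableSet_ball]
      refine lintegral_congr fun x => ?_
      by_cases hx : x ∈ ball (0 : EuclideanSpace ℝ (Fin n)) R
      · rw [hk, Set.indicator_of_mem hx, Set.indicator_of_mem hx]
      · rw [hk, Set.indicator_of_notMem hx, Set.indicator_of_notMem hx, ENNReal.zero_rpow_of_pos hs0]
    have e2 : ∫⁻ x, g x ^ p₁ = ∫⁻ x in ball a (2 ^ 1 * R), ‖f x‖ₑ ^ p₁ := by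
      rw [← lintegral_indicator measurableSet_ball]
      refine lintegral_congr fun x => ?_
      by_cases hx : x ∈ ball a (2 ^ 1 * R)
      · rw [hg, Set.indicator_of_mem hx, Set.indicator_of_mem hx]
      · rw [hg, Set.indicator_of_notMem hx, Set.indicator_of_notMem hx, ENNReal.zero_rpow_of_pos hp0]
    rw [e1, e2]
    have b1 := br_morrey_ball (q := t) hs0 (besselRieszKernel n α γ) 0 hR
    have b2 := br_morrey_ball (q := q₁) hp0 f a (by positivity : 0 < 2 ^ 1 * R)
    rw [br_vol hn a hR 1, pow_one (2 ^ n : ℝ≥0∞), ← hD,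
      ENNReal.mul_rpow_of_nonneg _ _ (by linarith)] at b2
    exact mul_le_mul' b1 b2
  have hcn : (∫⁻ x in ball a R, c ^ p₂) ^ (1 / p₂) = c * V ^ (1 / p₂) := by
    rw [setLIntegral_const, hvol, ENNReal.mul_rpow_of_nonneg _ _ hp₂i.le, ← ENNReal.rpow_mul,
      mul_one_div_cancel hp₂0.ne', ENNReal.rpow_one]
  have hmain : (∫⁻ x in ball a R, ‖besselRiesz n α γ f x‖ₑ ^ p₂) ^ (1 / p₂) ≤
      N * V ^ (1 / s - 1 / t) * (F * (C₁ * V ^ (1 / p₁ - 1 / q₁))) + c * V ^ (1 / p₂) := by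
    calc _ ≤ (∫⁻ x in ball a R, (U + (fun _ => c : EuclideanSpace ℝ (Fin n) → ℝ≥0∞)) x ^ p₂) ^ (1 / p₂) := by
          refine ENNReal.rpow_le_rpow ?_ hp₂i.le
          exact setLIntegral_mono' measurableSet_ball fun x hx =>
            ENNReal.rpow_le_rpow (hpt x hx) hp₂0.le
      _ ≤ _ := ENNReal.lintegral_Lp_add_le hUm.aemeasurable aemeasurable_const hp₂1
      _ ≤ _ := add_le_add hUn hcn.le
  calc _ ≤ V ^ (1 / q₂ - 1 / p₂) * (N * V ^ (1 / s - 1 / t) * (F * (C₁ * V ^ (1 / p₁ - 1 / q₁)))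
        + c * V ^ (1 / p₂)) := by gcongr
    _ = C₁ * N * F * (V ^ (1 / q₂ - 1 / p₂) * V ^ (1 / s - 1 / t) * V ^ (1 / p₁ - 1 / q₁)) +
        G * N * F * (V ^ (1 / q₂ - 1 / p₂) * V ^ (-(1 / q₂)) * V ^ (1 / p₂)) := by
        rw [hc]; ring
    _ = (C₁ + G) * N * F := by
        rw [← ENNReal.rpow_add _ _ v0 vt, ← ENNReal.rpow_add _ _ v0 vt,
          ← ENNReal.rpow_add _ _ v0 vt, ← ENNReal.rpow_add _ _ v0 vt]
        rw [show 1 / q₂ - 1 / p₂ + (1 / s - 1 / t) + (1 / p₁ - 1 / q₁) = 0 by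
            rw [hp₂, hq₂]; ring,
          show 1 / q₂ - 1 / p₂ + -(1 / q₂) + 1 / p₂ = 0 by ring, ENNReal.rpow_zero]
        ring
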